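/- arXiv:1501.01904 — 7 statements merged into one kernel-verified Lean document; each statement's English description precedes it below -/
import Mathlib

section
/- Let A be the incidence matrix of a connected directed graph on n nodes, fix 1 ≤ r < n, let A₁ be the first r rows and A₂ the last n−r rows of A, and set 𝕃₂₁ = A₂A₁ᵀ, 𝕃₂₂ = A₂A₂ᵀ. Then the solution set {(y,z) ∈ ℝʳ × ℝ^{n−r} : 𝕃₂₁ y + 𝕃₂₂ z = 0} is an r-dimensional linear subspace of ℝⁿ, equal to the graph of the linear map y ↦ −𝕃₂₂⁻¹𝕃₂₁ y. -/
open Matrix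

/-- `A` is the incidence matrix of a directed graph: each column has exactly one
entry equal to `+1`, exactly one entry equal to `-1`, and all other entries `0`. -/
def IsIncidenceMatrix {V E : Type*} (A : Matrix V E ℝ) : Prop :=
  ∀ j : E, ∃ i k : V, i ≠ k ∧ A i j = 1 ∧ A k j = -1 ∧
    ∀ l : V, l ≠ i → l ≠ k → A l j = 0

/-- The underlying undirected graph (nodes `a, b` adjacent iff some column of `A`
is nonzero in both rows) is connected. -/
def IsConnectedIncidence {V E : Type*} (A : Matrix V E ℝ) : Prop :=
  ∀ i k : V, Relation.ReflTransGen (fun a b => a ≠ b ∧ ∃ j : E, A a j ≠ 0 ∧ A b j ≠ 0) i k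

/-- Submatrix of `A` formed by the first block of rows (type-1 agents). -/
def firstRows {r s m : ℕ} (A : Matrix (Fin r ⊕ Fin s) (Fin m) ℝ) : Matrix (Fin r) (Fin m) ℝ :=
  A.submatrix Sum.inl id

/-- Submatrix of `A` formed by the last block of rows (type-2 agents). -/
def lastRows {r s m : ℕ} (A : Matrix (Fin r ⊕ Fin s) (Fin m) ℝ) : Matrix (Fin s) (Fin m) ℝ :=
  A.submatrix Sum.inr id

/-!
A potential `w` on the nodes with `w ᵥ* A = 0` takes the same value at the two ends of every edge,
so it is constant by connectedness. Hence a potential supported on a proper subset of the nodes and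
satisfying `w ᵥ* A = 0` vanishes, so the rows of `A` indexed by that subset have a positive definite
Gram matrix. In particular `𝕃₂₂` is invertible, and `𝕃₂₁ y + 𝕃₂₂ z = 0` can be solved for `z`.
-/

section LinearAlgebra

variable {R : Type*}

theorem finrank_graph {M N : Type*} [Semiring R] [AddCommMonoid M] [Module R M]
    [AddCommMonoid N] [Module R N] (f : M →ₗ[R] N) :
    Module.finrank R f.graph = Module.finrank R M := by
  rw [f.graph_eq_range_prod]
  exact LinearMap.finrank_range_of_inj fun _ _ h => congrArg Prod.fst h

theorem mulVec_eq_iff_eq_inv_mulVec {n : Type*} [Fintype n] [DecidableEq n] [CommRing R]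
    {C : Matrix n n R} (hC : IsUnit C) {v w : n → R} : C *ᵥ v = w ↔ v = C⁻¹ *ᵥ w := by
  have hdet : IsUnit C.det := C.isUnit_iff_isUnit_det.mp hC
  constructor
  · rintro rfl
    rw [mulVec_mulVec, nonsing_inv_mul C hdet, one_mulVec]
  · rintro rfl
    rw [mulVec_mulVec, mul_nonsing_inv C hdet, one_mulVec]

theorem ker_mulVecLin_coprod_eq_graph {k n : Type*} [Fintype k] [Fintype n] [DecidableEq n]
    [CommRing R] (B : Matrix n k R) {C : Matrix n n R} (hC : IsUnit C) :
    LinearMap.ker (B.mulVecLin.coprod C.mulVecLin) = (-(C⁻¹ * B).mulVecLin).graph := by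
  ext ⟨y, z⟩
  calc (y, z) ∈ LinearMap.ker (B.mulVecLin.coprod C.mulVecLin)
      ↔ B *ᵥ y + C *ᵥ z = 0 := Iff.rfl
    _ ↔ C *ᵥ z = -(B *ᵥ y) := by rw [add_comm, add_eq_zero_iff_eq_neg]
    _ ↔ z = C⁻¹ *ᵥ -(B *ᵥ y) := mulVec_eq_iff_eq_inv_mulVec hC
    _ ↔ z = -((C⁻¹ * B) *ᵥ y) := by rw [mulVec_neg, mulVec_mulVec]

end LinearAlgebra

theorem vecMul_submatrix_eq_extend_vecMul {R V W E : Type*} [NonUnitalNonAssocSemiring R]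
    [Fintype V] [Fintype W] (A : Matrix V E R) {f : W → V} (hf : f.Injective) (z : W → R) :
    z ᵥ* A.submatrix f id = Function.extend f z 0 ᵥ* A := by
  ext j
  simp only [vecMul, dotProduct, submatrix_apply, id]
  refine Fintype.sum_of_injective f hf _ _ (fun i hi => ?_) fun i => ?_
  · rw [Function.extend_apply' z _ i hi, Pi.zero_apply, zero_mul]
  · rw [hf.extend_apply]

namespace IsIncidenceMatrix

variable {V W E : Type*} {A : Matrix V E ℝ}

section Fintype

variable [Fintype V]

theorem exists_vecMul_apply_eq_sub (hA : IsIncidenceMatrix A) (j : E) :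
    ∃ i k, (∀ l, A l j ≠ 0 → l = i ∨ l = k) ∧ ∀ w : V → ℝ, (w ᵥ* A) j = w i - w k := by
  obtain ⟨i, k, hik, hi, hk, hzero⟩ := hA j
  refine ⟨i, k, fun l hl => ?_, fun w => ?_⟩
  · by_contra! hne
    exact hl (hzero l hne.1 hne.2)
  · calc (w ᵥ* A) j = w i * A i j + w k * A k j :=
          Fintype.sum_eq_add i k hik fun l hl => mul_eq_zero_of_right _ (hzero l hl.1 hl.2)
      _ = w i - w k := by rw [hi, hk]; ring

theorem apply_eq_apply_of_vecMul_eq_zero_of_ne_zero (hA : IsIncidenceMatrix A) {w : V → ℝ}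
    (hw : w ᵥ* A = 0) {a b : V} {j : E} (ha : A a j ≠ 0) (hb : A b j ≠ 0) : w a = w b := by
  obtain ⟨i, k, hsupport, hsub⟩ := hA.exists_vecMul_apply_eq_sub j
  have hik : w i = w k := sub_eq_zero.mp <| (hsub w).symm.trans (congrFun hw j)
  rcases hsupport a ha with rfl | rfl <;> rcases hsupport b hb with rfl | rfl <;> simp only [hik]

theorem apply_eq_apply_of_vecMul_eq_zero (hA : IsIncidenceMatrix A)
    (hconn : IsConnectedIncidence A) {w : V → ℝ} (hw : w ᵥ* A = 0) (a b : V) : w a = w b := by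
  induction hconn a b with
  | refl => rfl
  | tail _ hadj ih =>
    obtain ⟨-, j, hb, hc⟩ := hadj
    exact ih.trans (hA.apply_eq_apply_of_vecMul_eq_zero_of_ne_zero hw hb hc)

end Fintype

variable [Finite V]

theorem vecMul_submatrix_injective [Fintype W] (hA : IsIncidenceMatrix A)
    (hconn : IsConnectedIncidence A) {f : W → V} (hf : f.Injective) (hf' : ¬ f.Surjective) :
    Function.Injective (A.submatrix f id).vecMul := by
  have := Fintype.ofFinite V
  refine (injective_iff_map_eq_zero (A.submatrix f id).vecMulLinear).mpr fun z hz => ?_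
  have hextend : Function.extend f z 0 ᵥ* A = 0 :=
    (vecMul_submatrix_eq_extend_vecMul A hf z).symm.trans hz
  obtain ⟨v, hv⟩ : ∃ v, ¬ ∃ i, f i = v := not_forall.mp hf'
  ext i
  calc z i = Function.extend f z 0 (f i) := (hf.extend_apply z 0 i).symm
    _ = Function.extend f z 0 v := hA.apply_eq_apply_of_vecMul_eq_zero hconn hextend (f i) v
    _ = 0 := Function.extend_apply' z _ v hv

theorem posDef_submatrix_mul_transpose [Fintype E] (hA : IsIncidenceMatrix A)
    (hconn : IsConnectedIncidence A) {f : W → V} (hf : f.Injective) (hf' : ¬ f.Surjective) :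
    (A.submatrix f id * (A.submatrix f id)ᵀ).PosDef := by
  have := Fintype.ofFinite V
  have := Fintype.ofInjective f hf
  rw [← conjTranspose_eq_transpose_of_trivial]
  exact PosDef.mul_conjTranspose_self _ (hA.vecMul_submatrix_injective hconn hf hf')

end IsIncidenceMatrix

/-- The solution set of the constraint `𝕃₂₁ y + 𝕃₂₂ z = 0` is an `r`-dimensional
subspace of `ℝⁿ = ℝʳ × ℝ^{n-r}`, equal to the graph of `y ↦ -𝕃₂₂⁻¹ 𝕃₂₁ y`. -/
theorem stmt2 {r s m : ℕ} (hr : 1 ≤ r) (hs : 1 ≤ s)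
    (A : Matrix (Fin r ⊕ Fin s) (Fin m) ℝ)
    (hA : IsIncidenceMatrix A) (hconn : IsConnectedIncidence A) :
    let L21 := lastRows A * (firstRows A)ᵀ
    let L22 := lastRows A * (lastRows A)ᵀ
    let S : Submodule ℝ ((Fin r → ℝ) × (Fin s → ℝ)) :=
      LinearMap.ker ((Matrix.mulVecLin L21).coprod (Matrix.mulVecLin L22))
    Module.finrank ℝ S = r ∧
    ∀ (y : Fin r → ℝ) (z : Fin s → ℝ),
      ((y, z) ∈ S ↔ z = -((L22⁻¹ * L21) *ᵥ y)) := by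
  intro L21 L22 S
  have inr_not_surjective : ¬ (Sum.inr : Fin s → Fin r ⊕ Fin s).Surjective := fun h => by
    obtain ⟨i, hi⟩ := h (Sum.inl ⟨0, hr⟩)
    exact Sum.inr_ne_inl hi
  have isUnit_L22 : IsUnit L22 :=
    (hA.posDef_submatrix_mul_transpose hconn Sum.inr_injective inr_not_surjective).isUnit
  have S_eq_graph : S = (-(L22⁻¹ * L21).mulVecLin).graph :=
    ker_mulVecLin_coprod_eq_graph L21 isUnit_L22
  rw [S_eq_graph]
  exact ⟨(finrank_graph _).trans (Module.finrank_fin_fun ℝ), fun y z => LinearMap.mem_graph_iff _ _⟩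
end

section
/- Let A be the incidence matrix of a connected directed graph on n nodes, fix 1 ≤ r < n, and set 𝕃_{ij} = A_iA_jᵀ. If (y,z) : ℝ → ℝʳ × ℝ^{n−r} is a differentiable solution of the differential-algebraic system y′ = −𝕃₁₁ y − 𝕃₁₂ z, 0 = 𝕃₂₁ y + 𝕃₂₂ z, then the sum y₁(t) + ⋯ + yᵣ(t) is constant in t. -/
open Matrix

/-!
Write `𝕃 = A Aᵀ`, so that the system reads `(y', 0) = -𝕃 (y, z)`. Every column of an incidence
matrix sums to zero, so the all-ones row vector annihilates `𝕃` from the left. Pairing it with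
both sides of the system leaves `∑ i, y' i = 0`.
-/

theorem IsIncidenceMatrix.one_vecMul {V E : Type*} [Fintype V] {A : Matrix V E ℝ}
    (hA : IsIncidenceMatrix A) : 1 ᵥ* A = 0 := by
  funext j
  obtain ⟨head, tail, hne, hhead, htail, hother⟩ := hA j
  calc (1 ᵥ* A) j = ∑ l, A l j := one_dotProduct _
    _ = A head j + A tail j := Fintype.sum_eq_add head tail hne fun l hl => hother l hl.1 hl.2
    _ = 0 := by rw [hhead, htail, add_neg_cancel]

theorem mul_transpose_eq_fromBlocks_rows {r s m : ℕ} (A : Matrix (Fin r ⊕ Fin s) (Fin m) ℝ) :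
    A * Aᵀ = fromBlocks (firstRows A * (firstRows A)ᵀ) (firstRows A * (lastRows A)ᵀ)
      (lastRows A * (firstRows A)ᵀ) (lastRows A * (lastRows A)ᵀ) := by
  have hrows : fromRows (firstRows A) (lastRows A) = A := fromRows_toRows A
  rw [← fromRows_mul_fromCols, ← transpose_fromRows, hrows]

theorem IsIncidenceMatrix.one_vecMul_fromBlocks_rows {r s m : ℕ}
    {A : Matrix (Fin r ⊕ Fin s) (Fin m) ℝ} (hA : IsIncidenceMatrix A) :
    Sum.elim 1 1 ᵥ* fromBlocks (firstRows A * (firstRows A)ᵀ) (firstRows A * (lastRows A)ᵀ)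
      (lastRows A * (firstRows A)ᵀ) (lastRows A * (lastRows A)ᵀ) = 0 := by
  rw [← mul_transpose_eq_fromBlocks_rows, Sum.elim_one_one, ← vecMul_vecMul, hA.one_vecMul,
    zero_vecMul]

theorem dotProduct_add_eq_zero_of_vecMul_fromBlocks_eq_zero {ι κ ι' κ' R : Type*}
    [Fintype ι] [Fintype κ] [Fintype ι'] [Fintype κ'] [NonUnitalSemiring R]
    {L₁₁ : Matrix ι ι' R} {L₁₂ : Matrix ι κ' R} {L₂₁ : Matrix κ ι' R} {L₂₂ : Matrix κ κ' R}
    {p : ι → R} {q : κ → R} {y : ι' → R} {z : κ' → R}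
    (hpq : Sum.elim p q ᵥ* fromBlocks L₁₁ L₁₂ L₂₁ L₂₂ = 0)
    (hyz : L₂₁ *ᵥ y + L₂₂ *ᵥ z = 0) :
    p ⬝ᵥ (L₁₁ *ᵥ y + L₁₂ *ᵥ z) = 0 :=
  calc p ⬝ᵥ (L₁₁ *ᵥ y + L₁₂ *ᵥ z)
      = Sum.elim p q ⬝ᵥ fromBlocks L₁₁ L₁₂ L₂₁ L₂₂ *ᵥ Sum.elim y z := by
        rw [fromBlocks_mulVec, sumElim_dotProduct_sumElim, Sum.elim_comp_inl, Sum.elim_comp_inr,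
          hyz, dotProduct_zero, add_zero]
    _ = 0 := by rw [dotProduct_mulVec, hpq, zero_dotProduct]

theorem dotProduct_eq_of_hasDerivAt_of_dotProduct_eq_zero {ι 𝕜 : Type*} [Fintype ι] [RCLike 𝕜]
    {p : ι → 𝕜} {y y' : 𝕜 → ι → 𝕜}
    (hy : ∀ t, HasDerivAt y (y' t) t) (hp : ∀ t, p ⬝ᵥ y' t = 0) (t t' : 𝕜) :
    p ⬝ᵥ y t = p ⬝ᵥ y t' := by
  have hderiv (t : 𝕜) : HasDerivAt (fun τ => p ⬝ᵥ y τ) 0 t :=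
    hp t ▸ HasDerivAt.fun_sum fun i _ => (hasDerivAt_pi.1 (hy t) i).const_mul (p i)
  exact is_const_of_deriv_eq_zero (fun t => (hderiv t).differentiableAt)
    (fun t => (hderiv t).deriv) t t'

theorem stmt4_general {ι κ 𝕜 : Type*} [Fintype ι] [Fintype κ] [RCLike 𝕜]
    {L₁₁ : Matrix ι ι 𝕜} {L₁₂ : Matrix ι κ 𝕜} {L₂₁ : Matrix κ ι 𝕜} {L₂₂ : Matrix κ κ 𝕜}
    {p : ι → 𝕜} {q : κ → 𝕜} {y : 𝕜 → ι → 𝕜} {z : 𝕜 → κ → 𝕜}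
    (hpq : Sum.elim p q ᵥ* fromBlocks L₁₁ L₁₂ L₂₁ L₂₂ = 0)
    (hy : ∀ t, HasDerivAt y (-(L₁₁ *ᵥ y t) - L₁₂ *ᵥ z t) t)
    (hz : ∀ t, L₂₁ *ᵥ y t + L₂₂ *ᵥ z t = 0) (t t' : 𝕜) :
    p ⬝ᵥ y t = p ⬝ᵥ y t' := by
  refine dotProduct_eq_of_hasDerivAt_of_dotProduct_eq_zero hy (fun τ => ?_) t t'
  rw [← neg_add', dotProduct_neg,
    dotProduct_add_eq_zero_of_vecMul_fromBlocks_eq_zero hpq (hz τ), neg_zero]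

/-- Along any differentiable solution of the DAE `y' = -𝕃₁₁ y - 𝕃₁₂ z`,
`0 = 𝕃₂₁ y + 𝕃₂₂ z`, the sum `y₁(t) + ⋯ + yᵣ(t)` is constant in `t`. -/
theorem stmt4 {r s m : ℕ} (hr : 1 ≤ r) (hs : 1 ≤ s)
    (A : Matrix (Fin r ⊕ Fin s) (Fin m) ℝ)
    (hA : IsIncidenceMatrix A) (hconn : IsConnectedIncidence A)
    (y : ℝ → Fin r → ℝ) (z : ℝ → Fin s → ℝ)
    (hy : ∀ t : ℝ, HasDerivAt y
      (-((firstRows A * (firstRows A)ᵀ) *ᵥ y t) - (firstRows A * (lastRows A)ᵀ) *ᵥ z t) t)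
    (hz : ∀ t : ℝ, (lastRows A * (firstRows A)ᵀ) *ᵥ y t + (lastRows A * (lastRows A)ᵀ) *ᵥ z t = 0) :
    ∀ t t' : ℝ, ∑ i, y t i = ∑ i, y t' i := by
  simpa only [one_dotProduct] using stmt4_general hA.one_vecMul_fromBlocks_rows hy hz
end

section
/- Let A be the incidence matrix of a connected directed graph on n nodes, fix 1 ≤ r < n, and set 𝕃_{ij} = A_iA_jᵀ. Then the Schur complement S = 𝕃₁₁ − 𝕃₁₂𝕃₂₂⁻¹𝕃₂₁ ∈ ℝ^{r×r} is symmetric and positive semidefinite, and its kernel is the one-dimensional subspace spanned by the all-ones vector 𝟙ᵣ ∈ ℝʳ (so S has corank one). -/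
open Matrix

/-! Subtracting from the rows of `A₁` their orthogonal projections onto the row space of `A₂` leaves
a matrix `B` with `A₂ * Bᴴ = 0` and `S = A₁ * Bᴴ = B * Bᴴ`. Hence `S` is positive semidefinite, and
`x ᵥ* S = 0` iff `x ᵥ* A₁` lies in the row space of `A₂`, i.e. iff `x` extends to a vector in the
left kernel of the stacked matrix. For a connected graph that left kernel consists of the constant
vectors: this gives both the kernel of `S` and, for extensions of `x = 0`, the invertibility of
`A₂ * A₂ᴴ`. -/

section GramSchurComplement

variable {m₁ m₂ n R : Type*} [Fintype m₂] [DecidableEq m₂] [Fintype n] [CommRing R] [StarRing R]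

/-- The Schur complement of the block `A₂ * A₂ᴴ` in the Gram matrix of the rows of `A₁` and `A₂`.
It is meaningful when `A₂ * A₂ᴴ` is invertible, since `⁻¹` is `0` on singular matrices. -/
noncomputable def gramSchurComplement (A₁ : Matrix m₁ n R) (A₂ : Matrix m₂ n R) : Matrix m₁ m₁ R :=
  A₁ * A₁ᴴ - A₁ * A₂ᴴ * (A₂ * A₂ᴴ)⁻¹ * (A₂ * A₁ᴴ)

/-- The rows of `A₁` minus their orthogonal projections onto the row space of `A₂`, written with the
normal-equations formula for the projection, which presupposes that `A₂ * A₂ᴴ` is invertible. -/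
noncomputable def rowResidual (A₁ : Matrix m₁ n R) (A₂ : Matrix m₂ n R) : Matrix m₁ n R :=
  A₁ - A₁ * A₂ᴴ * (A₂ * A₂ᴴ)⁻¹ * A₂

theorem conjTranspose_rowResidual (A₁ : Matrix m₁ n R) (A₂ : Matrix m₂ n R) :
    (rowResidual A₁ A₂)ᴴ = A₁ᴴ - A₂ᴴ * (A₂ * A₂ᴴ)⁻¹ * (A₂ * A₁ᴴ) := by
  simp only [rowResidual, conjTranspose_sub, conjTranspose_mul, conjTranspose_nonsing_inv,
    conjTranspose_conjTranspose, Matrix.mul_assoc]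

theorem mul_conjTranspose_rowResidual (A₁ : Matrix m₁ n R) (A₂ : Matrix m₂ n R) :
    A₁ * (rowResidual A₁ A₂)ᴴ = gramSchurComplement A₁ A₂ := by
  simp only [conjTranspose_rowResidual, gramSchurComplement, Matrix.mul_sub, Matrix.mul_assoc]

variable {A₁ : Matrix m₁ n R} {A₂ : Matrix m₂ n R}

theorem mul_conjTranspose_rowResidual_eq_zero (hA₂ : IsUnit (A₂ * A₂ᴴ)) :
    A₂ * (rowResidual A₁ A₂)ᴴ = 0 := by
  have hdet : IsUnit (A₂ * A₂ᴴ).det := (isUnit_iff_isUnit_det _).1 hA₂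
  rw [conjTranspose_rowResidual, Matrix.mul_sub, ← Matrix.mul_assoc, ← Matrix.mul_assoc A₂ A₂ᴴ,
    mul_nonsing_inv _ hdet, Matrix.one_mul, sub_self]

theorem rowResidual_mul_conjTranspose_self (hA₂ : IsUnit (A₂ * A₂ᴴ)) :
    rowResidual A₁ A₂ * (rowResidual A₁ A₂)ᴴ = gramSchurComplement A₁ A₂ := by
  conv_lhs => enter [1]; rw [rowResidual]
  rw [Matrix.sub_mul, Matrix.mul_assoc _ A₂, mul_conjTranspose_rowResidual_eq_zero hA₂,
    Matrix.mul_zero, sub_zero, mul_conjTranspose_rowResidual]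

variable [PartialOrder R] [StarOrderedRing R]

theorem posSemidef_gramSchurComplement [Finite m₁] (hA₂ : IsUnit (A₂ * A₂ᴴ)) :
    (gramSchurComplement A₁ A₂).PosSemidef := by
  rw [← rowResidual_mul_conjTranspose_self hA₂]
  exact posSemidef_self_mul_conjTranspose _

theorem vecMul_gramSchurComplement_eq_zero_iff [Fintype m₁] [NoZeroDivisors R]
    (hA₂ : IsUnit (A₂ * A₂ᴴ)) {x : m₁ → R} :
    x ᵥ* gramSchurComplement A₁ A₂ = 0 ↔ ∃ y, Sum.elim x y ᵥ* fromRows A₁ A₂ = 0 := by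
  simp only [sumElim_vecMul_fromRows]
  constructor
  · intro hx
    have hres : x ᵥ* rowResidual A₁ A₂ = 0 := by
      rwa [← rowResidual_mul_conjTranspose_self hA₂, vecMul_self_mul_conjTranspose_eq_zero] at hx
    refine ⟨-(x ᵥ* (A₁ * A₂ᴴ * (A₂ * A₂ᴴ)⁻¹)), ?_⟩
    rwa [neg_vecMul, vecMul_vecMul, ← sub_eq_add_neg, ← vecMul_sub]
  · rintro ⟨y, hxy⟩
    rw [← mul_conjTranspose_rowResidual, ← vecMul_vecMul, eq_neg_of_add_eq_zero_left hxy,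
      neg_vecMul, vecMul_vecMul, mul_conjTranspose_rowResidual_eq_zero hA₂, vecMul_zero, neg_zero]

end GramSchurComplement

theorem mem_span_one_iff_forall_eq {ι R : Type*} [Semiring R] [Nonempty ι] {x : ι → R} :
    x ∈ Submodule.span R {(1 : ι → R)} ↔ ∀ i k, x i = x k := by
  rw [Submodule.mem_span_singleton]
  constructor
  · rintro ⟨c, rfl⟩ _ _
    rfl
  · intro hx
    obtain ⟨i⟩ := ‹Nonempty ι›
    exact ⟨x i, funext fun k => by simp [hx i k]⟩

section Incidence

variable {V E : Type*} [Fintype V] {A : Matrix V E ℝ}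

theorem IsIncidenceMatrix.exists_vecMul_apply_eq_sub_s6 (hA : IsIncidenceMatrix A) (j : E) :
    ∃ i k, (∀ l, A l j ≠ 0 → l = i ∨ l = k) ∧ ∀ x : V → ℝ, (x ᵥ* A) j = x i - x k := by
  obtain ⟨i, k, hik, hi, hk, hzero⟩ := hA j
  refine ⟨i, k, fun l hl => ?_, fun x => ?_⟩
  · by_contra! hne
    exact hl (hzero l hne.1 hne.2)
  · calc (x ᵥ* A) j = x i * A i j + x k * A k j :=
          Fintype.sum_eq_add i k hik fun l hl => mul_eq_zero_of_right _ (hzero l hl.1 hl.2)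
      _ = x i - x k := by rw [hi, hk]; ring

theorem IsIncidenceMatrix.apply_eq_of_adjacent (hA : IsIncidenceMatrix A) {x : V → ℝ}
    (hx : x ᵥ* A = 0) {a b : V} {j : E} (ha : A a j ≠ 0) (hb : A b j ≠ 0) : x a = x b := by
  obtain ⟨i, k, hsupport, hsub⟩ := hA.exists_vecMul_apply_eq_sub_s6 j
  have hik : x i = x k := sub_eq_zero.1 (by rw [← hsub, hx, Pi.zero_apply])
  rcases hsupport a ha with rfl | rfl <;> rcases hsupport b hb with rfl | rfl <;>
    simp only [hik]

theorem IsIncidenceMatrix.vecMul_eq_zero_iff (hA : IsIncidenceMatrix A)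
    (hconn : IsConnectedIncidence A) {x : V → ℝ} : x ᵥ* A = 0 ↔ ∀ i k, x i = x k := by
  constructor
  · intro hx i k
    induction hconn i k with
    | refl => rfl
    | tail _ hadj ih =>
      obtain ⟨-, j, ha, hb⟩ := hadj
      exact ih.trans (hA.apply_eq_of_adjacent hx ha hb)
  · intro hx
    ext j
    obtain ⟨i, k, -, hsub⟩ := hA.exists_vecMul_apply_eq_sub_s6 j
    rw [hsub, hx i k, sub_self, Pi.zero_apply]

end Incidence

section IncidenceSchurComplement

variable {V₁ V₂ E : Type*} [Nonempty V₁] [Fintype V₂] [DecidableEq V₂] [Fintype E]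
  {A : Matrix (V₁ ⊕ V₂) E ℝ}

theorem IsIncidenceMatrix.isUnit_toRows₂_mul_conjTranspose [Finite V₁]
    (hA : IsIncidenceMatrix A) (hconn : IsConnectedIncidence A) :
    IsUnit (A.toRows₂ * A.toRows₂ᴴ) := by
  have := Fintype.ofFinite V₁
  refine (PosDef.mul_conjTranspose_self A.toRows₂ ?_).isUnit
  refine (injective_iff_map_eq_zero A.toRows₂.vecMulLinear).2 fun y hy => ?_
  have hextend : Sum.elim (0 : V₁ → ℝ) y ᵥ* A = 0 := by
    rw [← fromRows_toRows A, sumElim_vecMul_fromRows, zero_vecMul, zero_add]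
    exact hy
  obtain ⟨i⟩ := ‹Nonempty V₁›
  exact funext fun k => (hA.vecMul_eq_zero_iff hconn).1 hextend (Sum.inr k) (Sum.inl i)

theorem IsIncidenceMatrix.vecMul_gramSchurComplement_toRows_eq_zero_iff [Fintype V₁]
    (hA : IsIncidenceMatrix A) (hconn : IsConnectedIncidence A) {x : V₁ → ℝ} :
    x ᵥ* gramSchurComplement A.toRows₁ A.toRows₂ = 0 ↔ ∀ i k, x i = x k := by
  rw [vecMul_gramSchurComplement_eq_zero_iff (hA.isUnit_toRows₂_mul_conjTranspose hconn),
    fromRows_toRows]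
  simp only [hA.vecMul_eq_zero_iff hconn]
  constructor
  · rintro ⟨_, hxy⟩ i k
    exact hxy (Sum.inl i) (Sum.inl k)
  · intro hx
    obtain ⟨i⟩ := ‹Nonempty V₁›
    have hconst : ∀ v, Sum.elim x (fun _ : V₂ => x i) v = x i := by
      rintro (k | _)
      exacts [hx k i, rfl]
    exact ⟨fun _ => x i, fun v w => (hconst v).trans (hconst w).symm⟩

theorem stmt6_general [Fintype V₁] (hA : IsIncidenceMatrix A) (hconn : IsConnectedIncidence A) :
    let A₁ := A.toRows₁
    let A₂ := A.toRows₂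
    let S := A₁ * A₁ᵀ - A₁ * A₂ᵀ * (A₂ * A₂ᵀ)⁻¹ * (A₂ * A₁ᵀ)
    S.IsSymm ∧ S.PosSemidef ∧
      LinearMap.ker (Matrix.mulVecLin S) = Submodule.span ℝ {(1 : V₁ → ℝ)} := by
  intro A₁ A₂ S
  have hS : S = gramSchurComplement A₁ A₂ := by
    simp only [S, gramSchurComplement, conjTranspose_eq_transpose_of_trivial]
  have hpos : S.PosSemidef :=
    hS ▸ posSemidef_gramSchurComplement (hA.isUnit_toRows₂_mul_conjTranspose hconn)
  have hsymm : S.IsSymm := isHermitian_iff_isSymm.1 hpos.isHermitian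
  refine ⟨hsymm, hpos, Submodule.ext fun x => ?_⟩
  rw [LinearMap.mem_ker, mulVecLin_apply, ← vecMul_transpose, hsymm.eq, hS,
    hA.vecMul_gramSchurComplement_toRows_eq_zero_iff hconn, mem_span_one_iff_forall_eq]

end IncidenceSchurComplement

/-- The Schur complement `S = 𝕃₁₁ - 𝕃₁₂ 𝕃₂₂⁻¹ 𝕃₂₁` is symmetric, positive
semidefinite, and its kernel is the span of the all-ones vector `𝟙ᵣ` (corank one). -/
theorem stmt6 {r s m : ℕ} (hr : 1 ≤ r) (hs : 1 ≤ s)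
    (A : Matrix (Fin r ⊕ Fin s) (Fin m) ℝ)
    (hA : IsIncidenceMatrix A) (hconn : IsConnectedIncidence A) :
    let L11 := firstRows A * (firstRows A)ᵀ
    let L12 := firstRows A * (lastRows A)ᵀ
    let L21 := lastRows A * (firstRows A)ᵀ
    let L22 := lastRows A * (lastRows A)ᵀ
    let S := L11 - L12 * L22⁻¹ * L21
    S.IsSymm ∧ S.PosSemidef ∧
    LinearMap.ker (Matrix.mulVecLin S) = Submodule.span ℝ {(1 : Fin r → ℝ)} := by
  have : Nonempty (Fin r) := ⟨⟨0, hr⟩⟩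
  exact stmt6_general hA hconn
end

section
/- Let A be the incidence matrix of a connected directed graph on n nodes and let x : [0,∞) → ℝⁿ be a differentiable solution of x′ = −A Aᵀ x. Then x(t) converges, as t → ∞, to the constant vector all of whose components equal the arithmetic mean (x₁(0) + ⋯ + xₙ(0))/n of the initial values. -/
open Matrix

/-!
Along a solution of `x' = -T x` with `T` symmetric, the component of `x` along an eigenvector with
eigenvalue `μ` is multiplied by `exp (-μ t)`. If `T` is positive, the components with `μ > 0`
therefore die out and those with `μ = 0` are conserved, so `x t` tends to the orthogonal projection
of `x 0` onto `ker T`. For `T = A Aᵀ` this kernel is that of `Aᵀ`, which takes a vector to its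
differences along the edges; on a connected graph it is the line of constant vectors, and
projecting onto that line is averaging.
-/

open Filter Set Topology
open scoped RealInnerProductSpace

section GradientFlow

theorem eq_exp_smul_of_hasDerivWithinAt {F : Type*} [NormedAddCommGroup F] [NormedSpace ℝ F]
    {y : ℝ → F} {μ : ℝ} (hy : ∀ t, 0 ≤ t → HasDerivWithinAt y (μ • y t) (Ici 0) t)
    {t : ℝ} (ht : 0 ≤ t) : y t = Real.exp (μ * t) • y 0 := by
  have hderiv (s : ℝ) (hs : 0 ≤ s) :
      HasDerivWithinAt (fun s ↦ Real.exp (-(μ * s)) • y s) 0 (Ici 0) s := by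
    have hexp : HasDerivAt (fun s ↦ Real.exp (-(μ * s))) (Real.exp (-(μ * s)) * -μ) s := by
      simpa using ((hasDerivAt_id s).const_mul μ).neg.exp
    refine (hexp.hasDerivWithinAt.smul (hy s hs)).congr_deriv ?_
    module
  have hconst : Real.exp (-(μ * t)) • y t = y 0 := by
    simpa using constant_of_has_deriv_right_zero
      (fun s hs ↦ (hderiv s hs.1).continuousWithinAt.mono Icc_subset_Ici_self)
      (fun s hs ↦ (hderiv s hs.1).mono (Ici_subset_Ici.2 hs.1)) t ⟨ht, le_rfl⟩
  rw [← hconst, smul_smul, ← Real.exp_add, add_neg_cancel, Real.exp_zero, one_smul]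

variable {F : Type*} [NormedAddCommGroup F] [InnerProductSpace ℝ F] {T : F →ₗ[ℝ] F}
  {x : ℝ → F}

theorem inner_eq_exp_mul_of_apply_eq_smul (hT : T.IsSymmetric)
    (hx : ∀ t, 0 ≤ t → HasDerivWithinAt x (-T (x t)) (Ici 0) t)
    {v : F} {μ : ℝ} (hv : T v = μ • v) {t : ℝ} (ht : 0 ≤ t) :
    ⟪v, x t⟫ = Real.exp (-μ * t) * ⟪v, x 0⟫ := by
  refine eq_exp_smul_of_hasDerivWithinAt (y := fun s ↦ ⟪v, x s⟫) (fun s hs ↦ ?_) ht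
  refine ((innerSL ℝ v).hasFDerivAt.comp_hasDerivWithinAt s (hx s hs)).congr_deriv ?_
  rw [innerSL_apply_apply, inner_neg_right, ← hT, hv, real_inner_smul_left, smul_eq_mul, neg_mul]

theorem mem_orthogonal_ker_of_apply_eq_smul (hT : T.IsSymmetric) {v : F} {μ : ℝ} (hμ : μ ≠ 0)
    (hv : T v = μ • v) : v ∈ T.kerᗮ := by
  refine (Submodule.mem_orthogonal _ _).2 fun w hw ↦ ?_
  have h : μ * ⟪w, v⟫ = 0 := by
    rw [← real_inner_smul_right, ← hv, ← hT, LinearMap.mem_ker.1 hw, inner_zero_left]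
  exact (mul_eq_zero.1 h).resolve_left hμ

theorem tendsto_inner_of_apply_eq_smul (hT : T.IsSymmetric) [T.ker.HasOrthogonalProjection]
    (hx : ∀ t, 0 ≤ t → HasDerivWithinAt x (-T (x t)) (Ici 0) t)
    {v : F} {μ : ℝ} (hμ : 0 ≤ μ) (hv : T v = μ • v) :
    Tendsto (fun t ↦ ⟪v, x t⟫) atTop (𝓝 ⟪v, T.ker.starProjection (x 0)⟫) := by
  have hsol : (fun t ↦ Real.exp (-μ * t) * ⟪v, x 0⟫) =ᶠ[atTop] fun t ↦ ⟪v, x t⟫ := by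
    filter_upwards [eventually_ge_atTop 0] with t ht
    exact (inner_eq_exp_mul_of_apply_eq_smul hT hx hv ht).symm
  refine Tendsto.congr' hsol ?_
  rw [← Submodule.inner_starProjection_left_eq_right]
  rcases hμ.eq_or_lt with rfl | hμ
  · have hker : v ∈ T.ker := by simpa using hv
    simp [Submodule.starProjection_eq_self_iff.2 hker]
  · have horth := mem_orthogonal_ker_of_apply_eq_smul hT hμ.ne' hv
    rw [(Submodule.starProjection_apply_eq_zero_iff _).2 horth, inner_zero_left]
    have hexp : Tendsto (fun t ↦ Real.exp (-μ * t)) atTop (𝓝 0) :=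
      Real.tendsto_exp_atBot.comp (tendsto_id.const_mul_atTop_of_neg (neg_lt_zero.2 hμ))
    simpa using hexp.mul_const ⟪v, x 0⟫

theorem tendsto_starProjection_ker_of_hasDerivWithinAt_neg [FiniteDimensional ℝ F]
    (hT : T.IsPositive) (hx : ∀ t, 0 ≤ t → HasDerivWithinAt x (-T (x t)) (Ici 0) t) :
    Tendsto x atTop (𝓝 (T.ker.starProjection (x 0))) := by
  let b := hT.isSymmetric.eigenvectorBasis rfl
  have hcoord (i) :
      Tendsto (fun t ↦ ⟪b i, x t⟫) atTop (𝓝 ⟪b i, T.ker.starProjection (x 0)⟫) :=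
    tendsto_inner_of_apply_eq_smul hT.isSymmetric hx (hT.nonneg_eigenvalues rfl i)
      (hT.isSymmetric.apply_eigenvectorBasis rfl i)
  have hsum := tendsto_finsetSum Finset.univ fun i _ ↦ (hcoord i).smul_const (b i)
  simpa only [b.sum_repr'] using hsum

end GradientFlow

section Consensus

variable {V : Type*} [Fintype V]

theorem starProjection_span_one (z : EuclideanSpace ℝ V) :
    (ℝ ∙ WithLp.toLp 2 (1 : V → ℝ)).starProjection z =
      WithLp.toLp 2 fun _ ↦ (∑ i, z i) / Fintype.card V := by
  ext i
  simp [Submodule.starProjection_singleton, EuclideanSpace.norm_sq_eq, PiLp.inner_apply]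

theorem tendsto_mean_of_mulVec_eq_zero_iff_const {L : Matrix V V ℝ} (hL : L.PosSemidef)
    (hker : ∀ z, L *ᵥ z = 0 ↔ ∃ c, z = Function.const V c) {x : ℝ → V → ℝ}
    (hx : ∀ t, 0 ≤ t → HasDerivWithinAt x (-(L *ᵥ x t)) (Ici 0) t) :
    Tendsto x atTop (𝓝 fun _ ↦ (∑ i, x 0 i) / Fintype.card V) := by
  classical
  have hspan : L.toEuclideanLin.ker = ℝ ∙ WithLp.toLp 2 (1 : V → ℝ) := by
    ext z
    rw [LinearMap.mem_ker, toLpLin_apply, WithLp.toLp_eq_zero, hker, Submodule.mem_span_singleton]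
    refine exists_congr fun c ↦ ?_
    simp [WithLp.ext_iff, funext_iff, eq_comm]
  have hderiv (t : ℝ) (ht : 0 ≤ t) : HasDerivWithinAt (fun t ↦ WithLp.toLp 2 (x t))
      (-L.toEuclideanLin (WithLp.toLp 2 (x t))) (Ici 0) t :=
    (PiLp.hasFDerivAt_toLp 2 (x t)).comp_hasDerivWithinAt t (hx t ht)
  have hlim := tendsto_starProjection_ker_of_hasDerivWithinAt_neg
    (isPositive_toEuclideanLin_iff.2 hL) hderiv
  rw [hspan, starProjection_span_one] at hlim
  exact ((PiLp.continuous_ofLp 2 _).tendsto _).comp hlim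

end Consensus

section Incidence

variable {V E : Type*} [Fintype V] {A : Matrix V E ℝ}

theorem transpose_mulVec_apply_eq_sub {i k : V} {j : E} (hik : i ≠ k) (hi : A i j = 1)
    (hk : A k j = -1) (hzero : ∀ l, l ≠ i → l ≠ k → A l j = 0) (z : V → ℝ) :
    (Aᵀ *ᵥ z) j = z i - z k := by
  have hsum : ∑ l, A l j * z l = A i j * z i + A k j * z k :=
    Fintype.sum_eq_add i k hik fun l hl ↦ by rw [hzero l hl.1 hl.2, zero_mul]
  calc (Aᵀ *ᵥ z) j = A i j * z i + A k j * z k := hsum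
    _ = z i - z k := by rw [hi, hk]; ring

theorem transpose_mulVec_const (hA : IsIncidenceMatrix A) (c : ℝ) :
    Aᵀ *ᵥ Function.const V c = 0 := by
  ext j
  obtain ⟨i, k, hik, hi, hk, hzero⟩ := hA j
  simp [transpose_mulVec_apply_eq_sub hik hi hk hzero]

theorem eq_of_transpose_mulVec_eq_zero_of_ne_zero (hA : IsIncidenceMatrix A) {z : V → ℝ}
    (hz : Aᵀ *ᵥ z = 0) {a b : V} {j : E} (ha : A a j ≠ 0) (hb : A b j ≠ 0) : z a = z b := by
  obtain ⟨i, k, hik, hi, hk, hzero⟩ := hA j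
  have hz_ik : z i = z k := by
    rw [← sub_eq_zero, ← transpose_mulVec_apply_eq_sub hik hi hk hzero, hz, Pi.zero_apply]
  have hend (l : V) (hl : A l j ≠ 0) : z l = z i := by
    by_cases hli : l = i
    · rw [hli]
    · rw [not_imp_comm.1 (hzero l hli) hl, hz_ik]
  rw [hend a ha, hend b hb]

theorem transpose_mulVec_eq_zero_iff (hA : IsIncidenceMatrix A) (hconn : IsConnectedIncidence A)
    (z : V → ℝ) : Aᵀ *ᵥ z = 0 ↔ ∃ c, z = Function.const V c := by
  refine ⟨fun hz ↦ ?_, fun ⟨c, hc⟩ ↦ hc ▸ transpose_mulVec_const hA c⟩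
  have hconst (a b : V) : z a = z b := by
    induction hconn a b with
    | refl => rfl
    | tail _ hadj ih =>
      obtain ⟨-, j, hb, hc⟩ := hadj
      exact ih.trans (eq_of_transpose_mulVec_eq_zero_of_ne_zero hA hz hb hc)
  rcases isEmpty_or_nonempty V with _ | ⟨⟨a⟩⟩
  · exact ⟨0, Subsingleton.elim _ _⟩
  · exact ⟨z a, funext fun b ↦ hconst b a⟩

theorem stmt8_general [Fintype E] (hA : IsIncidenceMatrix A) (hconn : IsConnectedIncidence A)
    {x : ℝ → V → ℝ}
    (hx : ∀ t, 0 ≤ t → HasDerivWithinAt x (-((A * Aᵀ) *ᵥ x t)) (Ici 0) t) :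
    Tendsto x atTop (𝓝 fun _ ↦ (∑ i, x 0 i) / Fintype.card V) := by
  have hpos : (A * Aᵀ).PosSemidef := posSemidef_self_mul_conjTranspose A
  refine tendsto_mean_of_mulVec_eq_zero_iff_const hpos (fun z ↦ ?_) hx
  exact (self_mul_conjTranspose_mulVec_eq_zero A z).trans (transpose_mulVec_eq_zero_iff hA hconn z)

end Incidence

/-- Any solution of the Laplacian flow `x' = -A Aᵀ x` on a connected digraph
converges, as `t → ∞`, to the constant vector whose components all equal the
arithmetic mean of the initial values. -/
theorem stmt8 {n m : ℕ} (A : Matrix (Fin n) (Fin m) ℝ)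
    (hA : IsIncidenceMatrix A) (hconn : IsConnectedIncidence A)
    (x : ℝ → Fin n → ℝ)
    (hx : ∀ t : ℝ, 0 ≤ t → HasDerivAt x (-((A * Aᵀ) *ᵥ x t)) t) :
    Filter.Tendsto x Filter.atTop (nhds (fun _ => (∑ i, x 0 i) / n)) := by
  simpa using stmt8_general hA hconn fun t ht ↦ (hx t ht).hasDerivWithinAt
end

section
/- Consider n agents partitioned into p nonempty groups, with membership matrix A_H and group Laplacian 𝔾 = A_G A_Gᵀ. If (x,y) : ℝ → ℝⁿ × ℝᵖ is a differentiable solution of x′ = −x + A_H(A_HᵀA_H)⁻¹ y, y′ = A_Hᵀ x − (I_p + 𝔾) y, then the quantity x₁(t) + ⋯ + xₙ(t) + y₁(t) + ⋯ + y_p(t) is constant in t. -/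
open Matrix

/-- The 0/1 membership matrix of the partition of the `n` agents into `p` groups
determined by `χ`. -/
def membershipMatrix {n p : ℕ} (χ : Fin n → Fin p) : Matrix (Fin n) (Fin p) ℝ :=
  Matrix.of fun i j => if χ i = j then 1 else 0

/-!
The all-ones vector is a left null vector of the system matrix. It is a left null vector of `AG`,
hence of `AG * AGᵀ`; and since each row of the membership matrix `A` sums to one, both `Aᵀ` and its
right inverse `A * (Aᵀ * A)⁻¹` have unit column sums. So whatever leaves `x` enters `y` and
conversely.
-/

theorem sum_add_sum_eq_of_hasDerivAt {ι κ E : Type*} [Fintype ι] [Fintype κ]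
    [NormedAddCommGroup E] [NormedSpace ℝ E] {x x' : ℝ → ι → E} {y y' : ℝ → κ → E}
    (hx : ∀ t, HasDerivAt x (x' t) t) (hy : ∀ t, HasDerivAt y (y' t) t)
    (hsum : ∀ t, ∑ i, x' t i + ∑ j, y' t j = 0) (t t' : ℝ) :
    ∑ i, x t i + ∑ j, y t j = ∑ i, x t' i + ∑ j, y t' j := by
  have hderiv (s : ℝ) : HasDerivAt (fun s => ∑ i, x s i + ∑ j, y s j) 0 s := by
    rw [← hsum s]
    exact (HasDerivAt.fun_sum fun i _ => hasDerivAt_pi.1 (hx s) i).add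
      (HasDerivAt.fun_sum fun j _ => hasDerivAt_pi.1 (hy s) j)
  exact is_const_of_deriv_eq_zero (fun s => (hderiv s).differentiableAt)
    (fun s => (hderiv s).deriv) t t'

theorem one_vecMul_mul_gram_inv {ι κ R : Type*} [Fintype ι] [Fintype κ] [DecidableEq κ]
    [CommRing R] {A : Matrix ι κ R} (hrow : A *ᵥ 1 = 1) (hgram : IsUnit (Aᵀ * A).det) :
    1 ᵥ* (A * (Aᵀ * A)⁻¹) = 1 :=
  calc 1 ᵥ* (A * (Aᵀ * A)⁻¹)
    _ = (1 ᵥ* Aᵀ) ᵥ* (A * (Aᵀ * A)⁻¹) := by rw [vecMul_transpose, hrow]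
    _ = 1 ᵥ* ((Aᵀ * A) * (Aᵀ * A)⁻¹) := by rw [vecMul_vecMul, Matrix.mul_assoc]
    _ = 1 := by rw [mul_nonsing_inv _ hgram, vecMul_one]

theorem isUnit_det_gram_of_injective_mulVec {ι κ : Type*} [Fintype ι] [Fintype κ]
    [DecidableEq κ] {A : Matrix ι κ ℝ} (hA : Function.Injective A.mulVec) :
    IsUnit (Aᵀ * A).det := by
  rw [← isUnit_iff_isUnit_det, ← conjTranspose_eq_transpose_of_trivial]
  exact (PosDef.conjTranspose_mul_self A hA).isUnit

theorem membershipMatrix_mulVec {n p : ℕ} (χ : Fin n → Fin p) (v : Fin p → ℝ) :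
    membershipMatrix χ *ᵥ v = v ∘ χ := by
  ext i
  simp [membershipMatrix, mulVec, dotProduct]

theorem membershipMatrix_mulVec_one {n p : ℕ} (χ : Fin n → Fin p) :
    membershipMatrix χ *ᵥ 1 = 1 :=
  membershipMatrix_mulVec χ 1

theorem membershipMatrix_mulVec_injective {n p : ℕ} {χ : Fin n → Fin p}
    (hχ : Function.Surjective χ) : Function.Injective (membershipMatrix χ).mulVec := by
  rw [funext (membershipMatrix_mulVec χ)]
  exact hχ.injective_comp_right

theorem IsIncidenceMatrix.one_vecMul_mul_transpose {V E : Type*} [Fintype V] [Fintype E]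
    {A : Matrix V E ℝ} (hA : IsIncidenceMatrix A) : 1 ᵥ* (A * Aᵀ) = 0 := by
  rw [← vecMul_vecMul, hA.one_vecMul, zero_vecMul]

theorem stmt11_general {ι κ : Type*} [Fintype ι] [Fintype κ] [DecidableEq κ]
    {A : Matrix ι κ ℝ} (hrow : A *ᵥ 1 = 1) (hinj : Function.Injective A.mulVec)
    {L : Matrix κ κ ℝ} (hL : 1 ᵥ* L = 0) {x : ℝ → ι → ℝ} {y : ℝ → κ → ℝ}
    (hx : ∀ t, HasDerivAt x (-x t + (A * (Aᵀ * A)⁻¹) *ᵥ y t) t)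
    (hy : ∀ t, HasDerivAt y (Aᵀ *ᵥ x t - (1 + L) *ᵥ y t) t) (t t' : ℝ) :
    ∑ i, x t i + ∑ j, y t j = ∑ i, x t' i + ∑ j, y t' j := by
  refine sum_add_sum_eq_of_hasDerivAt hx hy (fun s => ?_) t t'
  have sum_gramInv_mulVec : 1 ⬝ᵥ (A * (Aᵀ * A)⁻¹) *ᵥ y s = 1 ⬝ᵥ y s := by
    rw [dotProduct_mulVec,
      one_vecMul_mul_gram_inv hrow (isUnit_det_gram_of_injective_mulVec hinj)]
  have sum_transpose_mulVec : 1 ⬝ᵥ Aᵀ *ᵥ x s = 1 ⬝ᵥ x s := by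
    rw [dotProduct_mulVec, vecMul_transpose, hrow]
  have sum_one_add_mulVec : 1 ⬝ᵥ (1 + L) *ᵥ y s = 1 ⬝ᵥ y s := by
    rw [dotProduct_mulVec, vecMul_add, vecMul_one, hL, add_zero]
  rw [← one_dotProduct, ← one_dotProduct, dotProduct_add, dotProduct_neg, dotProduct_sub,
    sum_gramInv_mulVec, sum_transpose_mulVec, sum_one_add_mulVec]
  ring

/-- Along any differentiable solution of `x' = -x + A_H (A_Hᵀ A_H)⁻¹ y`,
`y' = A_Hᵀ x - (I_p + 𝔾) y`, the quantity `∑ᵢ xᵢ(t) + ∑ⱼ yⱼ(t)` is constant. -/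
theorem stmt11 {n p q : ℕ} (χ : Fin n → Fin p) (hχ : Function.Surjective χ)
    (AG : Matrix (Fin p) (Fin q) ℝ) (hAG : IsIncidenceMatrix AG)
    (x : ℝ → Fin n → ℝ) (y : ℝ → Fin p → ℝ)
    (hx : ∀ t : ℝ, HasDerivAt x
      (-(x t) + (membershipMatrix χ * ((membershipMatrix χ)ᵀ * membershipMatrix χ)⁻¹) *ᵥ y t) t)
    (hy : ∀ t : ℝ, HasDerivAt y
      ((membershipMatrix χ)ᵀ *ᵥ x t - (1 + AG * AGᵀ) *ᵥ y t) t) :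
    ∀ t t' : ℝ, (∑ i, x t i) + (∑ j, y t j) = (∑ i, x t' i) + (∑ j, y t' j) :=
  stmt11_general (membershipMatrix_mulVec_one χ) (membershipMatrix_mulVec_injective hχ)
    hAG.one_vecMul_mul_transpose hx hy
end

section
/- Let A be the incidence matrix of a connected directed graph on n nodes and m edges, let W = diag(W₁,…,W_m) be a diagonal matrix of edge weights, and let A_r be the reduced incidence matrix obtained from A by deleting one row. Then det(A_r W A_rᵀ) = Σ_T ∏_{j ∈ T} W_j, where the sum ranges over all sets T of n−1 edge indices whose corresponding edges form a spanning tree of the underlying graph (the weighted matrix-tree expansion). -/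
open Matrix

/-- A set `T` of `n - 1` edges (columns of `A`) is a spanning tree of the
underlying graph of an incidence matrix on `n` nodes: it has `n - 1` edges and
the subgraph formed by the edges of `T` connects all the nodes. -/
def IsSpanningTree {n m : ℕ} (A : Matrix (Fin n) (Fin m) ℝ) (T : Finset (Fin m)) : Prop :=
  T.card = n - 1 ∧
  ∀ i k : Fin n, Relation.ReflTransGen
    (fun a b => a ≠ b ∧ ∃ j ∈ T, A a j ≠ 0 ∧ A b j ≠ 0) i k

/-- The finite set of all spanning trees of the underlying graph of `A`. -/
noncomputable def spanningTrees {n m : ℕ} (A : Matrix (Fin n) (Fin m) ℝ) :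
    Finset (Finset (Fin m)) :=
  @Finset.filter _ (fun T => IsSpanningTree A T) (Classical.decPred _) Finset.univ

/-- The reduced incidence matrix obtained from `A` by deleting row `i0`. -/
def reducedIncidence {n m : ℕ} (A : Matrix (Fin (n + 1)) (Fin m) ℝ) (i0 : Fin (n + 1)) :
    Matrix (Fin n) (Fin m) ℝ :=
  A.submatrix i0.succAbove id

/-!
By the Cauchy–Binet formula, `det (A_r W A_rᵀ)` is the sum over the sets `T` of `n - 1` columns of
`∏_{j ∈ T} W_j` times the square of the corresponding maximal minor of `A_r`. A vector is in the
left kernel of an incidence matrix iff it is constant along every edge, so the minor on the columns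
`T` is nonzero iff the edges in `T` connect the graph. As incidence matrices are totally unimodular,
the square of the minor is then `1`.
-/

open Finset

theorem filter_powersetCard_forall_mem_eq_singleton {ι κ : Type*} [Fintype ι] [Fintype κ]
    [DecidableEq κ] {r : ι → κ} (hr : r.Injective) :
    {T ∈ powersetCard (Fintype.card ι) (univ : Finset κ) | ∀ i, r i ∈ T} = {univ.image r} := by
  have card_image : #(univ.image r) = Fintype.card ι := by
    rw [card_image_of_injective _ hr, card_univ]
  ext T
  simp only [mem_filter, mem_powersetCard_univ, mem_singleton]
  constructor
  · rintro ⟨hcard, hmem⟩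
    exact (eq_of_subset_of_card_le (by simpa [image_subset_iff] using hmem) (by lia)).symm
  · rintro rfl
    exact ⟨card_image, fun i => mem_image_of_mem r (mem_univ i)⟩

section CauchyBinet

variable {ι κ R : Type*} [Fintype ι] [DecidableEq ι] [CommRing R]

theorem det_sum_mul_eq_sum_piFinset (B : Matrix ι κ R) (C : Matrix κ ι R) (T : Finset κ) :
    (of fun i k => ∑ j ∈ T, B i j * C j k).det =
      ∑ r ∈ Fintype.piFinset fun _ : ι => T, (∏ i, B i (r i)) * (C.submatrix r id).det := by
  have rows_eq : (of fun i k => ∑ j ∈ T, B i j * C j k) = fun i => ∑ j ∈ T, B i j • C j := by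
    ext i k
    simp
  calc (of fun i k => ∑ j ∈ T, B i j * C j k).det
      = (detRowAlternating (R := R) (n := ι)).toMultilinearMap
          fun i => ∑ j ∈ T, B i j • C j := by rw [rows_eq]; rfl
    _ = _ := by
      rw [MultilinearMap.map_sum_finset]
      exact sum_congr rfl fun r _ => MultilinearMap.map_smul_univ _ _ _

/-- Cauchy–Binet. The term of `T` is written as a determinant of a product, which for `#T = #ι` is
the product of the two minors on `T`, so that no enumeration of `T` has to be chosen. -/
theorem det_mul_eq_sum_powersetCard [Fintype κ] (B : Matrix ι κ R) (C : Matrix κ ι R) :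
    (B * C).det = ∑ T ∈ powersetCard (Fintype.card ι) (univ : Finset κ),
      (B.submatrix id ((↑) : T → κ) * C.submatrix ((↑) : T → κ) id).det := by
  classical
  let term (r : ι → κ) : R := (∏ i, B i (r i)) * (C.submatrix r id).det
  have term_eq_zero (r : ι → κ) (hr : ¬ r.Injective) : term r = 0 := by
    obtain ⟨a, b, hab, hne⟩ := Function.not_injective_iff.1 hr
    have rows_eq : C.submatrix r id a = C.submatrix r id b := congrArg C hab
    simp only [term, det_zero_of_row_eq hne rows_eq, mul_zero]
  have det_restrict (T : Finset κ) :
      (B.submatrix id ((↑) : T → κ) * C.submatrix ((↑) : T → κ) id).det =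
        ∑ r : ι → κ with ∀ i, r i ∈ T, term r := by
    rw [show ({r : ι → κ | ∀ i, r i ∈ T} : Finset _) = Fintype.piFinset fun _ => T by ext; simp,
      ← det_sum_mul_eq_sum_piFinset B C T]
    congr 1
    ext i k
    simpa [mul_apply] using sum_coe_sort T fun j => B i j * C j k
  calc (B * C).det = ∑ r, term r := by
        rw [← Fintype.piFinset_univ]
        exact det_sum_mul_eq_sum_piFinset B C univ
    _ = ∑ r, ∑ T ∈ powersetCard (Fintype.card ι) univ with ∀ i, r i ∈ T, term r := by
        refine sum_congr rfl fun r _ => ?_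
        by_cases hr : r.Injective
        · rw [filter_powersetCard_forall_mem_eq_singleton hr, sum_singleton]
        · simp [term_eq_zero r hr]
    _ = _ := by
        simp only [det_restrict, sum_filter]
        exact sum_comm

theorem det_mul_diagonal_mul_transpose_of_equiv [Fintype κ] [DecidableEq κ] (B : Matrix ι κ R)
    (w : κ → R) (e : ι ≃ κ) :
    (B * diagonal w * Bᵀ).det = (∏ j, w j) * (B.submatrix id e).det ^ 2 := by
  have reindex_eq : B * diagonal w * Bᵀ =
      B.submatrix id e * diagonal (w ∘ e) * (B.submatrix id e)ᵀ := by
    rw [← submatrix_diagonal_equiv, transpose_submatrix, submatrix_mul_equiv, submatrix_mul_equiv,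
      submatrix_id_id]
  rw [reindex_eq, det_mul, det_mul, det_diagonal, det_transpose, ← e.prod_comp w]
  simp only [Function.comp_apply]
  ring

theorem det_mul_diagonal_mul_transpose_eq_sum_powersetCard [Fintype κ] [DecidableEq κ]
    (B : Matrix ι κ R) (w : κ → R) :
    (B * diagonal w * Bᵀ).det = ∑ T ∈ powersetCard (Fintype.card ι) (univ : Finset κ),
      (B.submatrix id ((↑) : T → κ) * diagonal (fun j : T => w j) *
        (B.submatrix id ((↑) : T → κ))ᵀ).det := by
  rw [det_mul_eq_sum_powersetCard]
  refine sum_congr rfl fun T _ => ?_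
  congr 2
  ext i j
  simp

end CauchyBinet

theorem mul_mem_range_signTypeCast {R : Type*} [Ring R] {x y : R}
    (hx : x ∈ Set.range (SignType.cast : SignType → R))
    (hy : y ∈ Set.range (SignType.cast : SignType → R)) :
    x * y ∈ Set.range (SignType.cast : SignType → R) := by
  obtain ⟨s, rfl⟩ := hx
  obtain ⟨t, rfl⟩ := hy
  exact ⟨s * t, SignType.coe_mul s t⟩

theorem det_mem_range_signTypeCast_of_column {R : Type*} [CommRing R] {k : ℕ}
    (M : Matrix (Fin (k + 1)) (Fin (k + 1)) R) {r c : Fin (k + 1)}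
    (hcol : ∀ i ≠ r, M i c = 0)
    (hentry : M r c ∈ Set.range (SignType.cast : SignType → R))
    (hminor : (M.submatrix r.succAbove c.succAbove).det ∈
      Set.range (SignType.cast : SignType → R)) :
    M.det ∈ Set.range (SignType.cast : SignType → R) := by
  rw [det_succ_column M c, Fintype.sum_eq_single r fun i hi => by rw [hcol i hi]; ring]
  have sign_mem : (-1 : R) ^ (r + c : ℕ) ∈ Set.range (SignType.cast : SignType → R) :=
    ⟨(-1) ^ (r + c : ℕ), by simp⟩
  exact mul_mem_range_signTypeCast (mul_mem_range_signTypeCast sign_mem hentry) hminor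

namespace IsIncidenceMatrix

variable {V E : Type*} {A : Matrix V E ℝ}

theorem submatrix_id {F : Type*} (hA : IsIncidenceMatrix A) (g : F → E) :
    IsIncidenceMatrix (A.submatrix id g) :=
  fun j => hA (g j)

theorem exists_apply_eq [DecidableEq V] (hA : IsIncidenceMatrix A) (j : E) :
    ∃ i k, i ≠ k ∧ ∀ v, A v j = (if v = i then 1 else 0) - (if v = k then 1 else 0) := by
  obtain ⟨i, k, hik, hi, hk, hzero⟩ := hA j
  exact ⟨i, k, hik, fun v => by grind⟩

theorem apply_mem_range_signTypeCast (hA : IsIncidenceMatrix A) (v : V) (j : E) :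
    A v j ∈ Set.range (SignType.cast : SignType → ℝ) := by
  obtain ⟨i, k, -, hi, hk, hzero⟩ := hA j
  rcases eq_or_ne v i with rfl | hvi
  · exact ⟨1, by simp [hi]⟩
  rcases eq_or_ne v k with rfl | hvk
  · exact ⟨-1, by simp [hk]⟩
  · exact ⟨0, by simp [hzero v hvi hvk]⟩

theorem sum_apply_eq_zero_or_exists_forall_ne {ι : Type*} [Fintype ι] [Nonempty ι]
    (hA : IsIncidenceMatrix A) {f : ι → V} (hf : f.Injective) (j : E) :
    ∑ u, A (f u) j = 0 ∨ ∃ r, ∀ u ≠ r, A (f u) j = 0 := by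
  classical
  obtain ⟨i, k, -, hcol⟩ := hA.exists_apply_eq j
  simp only [hcol]
  by_cases hi : ∃ a, f a = i
  · obtain ⟨a, rfl⟩ := hi
    by_cases hk : ∃ b, f b = k
    · obtain ⟨b, rfl⟩ := hk
      left
      simp [hf.eq_iff]
    · exact .inr ⟨a, fun u hu => by grind⟩
  · by_cases hk : ∃ b, f b = k
    · obtain ⟨b, rfl⟩ := hk
      exact .inr ⟨b, fun u hu => by grind⟩
    · exact .inr ⟨Classical.arbitrary ι, fun u _ => by grind⟩

theorem isTotallyUnimodular (hA : IsIncidenceMatrix A) : A.IsTotallyUnimodular := by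
  intro k
  induction k with
  | zero => exact fun f g _ _ => ⟨1, by simp⟩
  | succ k ih =>
    intro f g hf hg
    by_cases hsum : ∀ c, ∑ u, A (f u) (g c) = 0
    · have det_eq_zero : (A.submatrix f g).det = 0 :=
        exists_vecMul_eq_zero_iff.1
          ⟨1, one_ne_zero, by ext c; simpa [vecMul, dotProduct] using hsum c⟩
      exact ⟨0, by simp [det_eq_zero]⟩
    · obtain ⟨c, hc⟩ := not_forall.1 hsum
      obtain ⟨r, hr⟩ := (hA.sum_apply_eq_zero_or_exists_forall_ne hf (g c)).resolve_left hc
      exact det_mem_range_signTypeCast_of_column _ hr (hA.apply_mem_range_signTypeCast _ _)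
        (ih _ _ (hf.comp Fin.succAbove_right_injective) (hg.comp Fin.succAbove_right_injective))

theorem vecMul_eq_zero_iff_s16 [Fintype V] (hA : IsIncidenceMatrix A) (x : V → ℝ) :
    x ᵥ* A = 0 ↔ ∀ a b j, A a j ≠ 0 → A b j ≠ 0 → x a = x b := by
  classical
  rw [funext_iff]
  have apply_eq_zero_iff (j : E) : (x ᵥ* A) j = 0 ↔ ∀ a b, A a j ≠ 0 → A b j ≠ 0 → x a = x b := by
    obtain ⟨i, k, hik, hcol⟩ := hA.exists_apply_eq j
    have vecMul_eq_sub : (x ᵥ* A) j = x i - x k := by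
      simp [vecMul, dotProduct, hcol, mul_sub, sum_sub_distrib]
    rw [vecMul_eq_sub, sub_eq_zero]
    grind
  simp only [Pi.zero_apply, apply_eq_zero_iff]
  exact ⟨fun h a b j => h j a b, fun h j a b => h a b j⟩

theorem isConnectedIncidence_iff [Fintype V] (hA : IsIncidenceMatrix A) :
    IsConnectedIncidence A ↔ ∀ x : V → ℝ, x ᵥ* A = 0 → ∀ a b, x a = x b := by
  classical
  simp only [hA.vecMul_eq_zero_iff_s16]
  constructor
  · intro hconn x hx a b
    induction hconn a b with
    | refl => rfl
    | tail _ hadj ih =>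
      obtain ⟨-, j, hcj, hdj⟩ := hadj
      exact ih.trans (hx _ _ j hcj hdj)
  · intro hconst a b
    let Reachable : V → Prop :=
      Relation.ReflTransGen (fun c d => c ≠ d ∧ ∃ j, A c j ≠ 0 ∧ A d j ≠ 0) a
    have reachable_of_edge (c d : V) (j : E) (hc : A c j ≠ 0) (hd : A d j ≠ 0)
        (hac : Reachable c) : Reachable d := by
      rcases eq_or_ne c d with rfl | hne
      · exact hac
      · exact hac.tail ⟨hne, j, hc, hd⟩
    have indicator_eq := hconst (fun c => if Reachable c then 1 else 0)
      (fun c d j hc hd => by grind) a b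
    by_contra hb
    simp [Reachable, hb, Relation.ReflTransGen.refl] at indicator_eq

end IsIncidenceMatrix

/-- The matrix `A` with the row `v₀` deleted: the reduced incidence matrix `A_r` for an arbitrary
vertex type, its rows being indexed by the vertices other than `v₀`. -/
def deleteRow {V E R : Type*} (A : Matrix V E R) (v₀ : V) : Matrix {v // v ≠ v₀} E R :=
  A.submatrix (↑) id

/-- Spanning trees for arbitrary vertex and edge types, as in `IsSpanningTree`: `T` has one edge
less than there are vertices, and the columns in `T` form a connected incidence matrix. -/
def IsSpanningTreeOf {V E : Type*} [Fintype V] (A : Matrix V E ℝ) (T : Finset E) : Prop :=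
  #T + 1 = Fintype.card V ∧ IsConnectedIncidence (A.submatrix id ((↑) : T → E))

theorem card_subtype_ne_add_one {V : Type*} [Fintype V] [DecidableEq V] (v₀ : V) :
    Fintype.card {v // v ≠ v₀} + 1 = Fintype.card V := by
  rw [← Fintype.card_option, Fintype.card_congr (Equiv.optionSubtypeNe v₀)]

theorem vecMul_deleteRow {V E R : Type*} [Fintype V] [DecidableEq V] [NonUnitalNonAssocSemiring R]
    (A : Matrix V E R) (x : V → R) (v₀ : V) (hx : x v₀ = 0) :
    (fun v : {v // v ≠ v₀} => x v) ᵥ* deleteRow A v₀ = x ᵥ* A := by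
  ext j
  simp [vecMul, dotProduct, deleteRow, Fintype.sum_eq_add_sum_subtype_ne _ v₀, hx]

section DeleteRow

variable {V E : Type*} [Fintype V] [DecidableEq V] {A : Matrix V E ℝ}

namespace IsIncidenceMatrix

theorem isConnectedIncidence_iff_vecMul_deleteRow (hA : IsIncidenceMatrix A) (v₀ : V) :
    IsConnectedIncidence A ↔ ∀ y, y ᵥ* deleteRow A v₀ = 0 → y = 0 := by
  rw [hA.isConnectedIncidence_iff]
  constructor
  · intro hconst y hy
    let x (v : V) : ℝ := if hv : v ≠ v₀ then y ⟨v, hv⟩ else 0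
    have restrict_x : (fun v : {v // v ≠ v₀} => x v) = y := by
      ext v
      simp [x, v.2]
    have hx : x ᵥ* A = 0 := by
      rw [← vecMul_deleteRow A x v₀ (by simp [x]), restrict_x, hy]
    rw [← restrict_x]
    ext v
    simpa [x] using hconst x hx v v₀
  · intro hzero x hx
    suffices ∀ v, x v = x v₀ from fun a b => (this a).trans (this b).symm
    have shifted_vecMul : (fun v => x v - x v₀) ᵥ* A = 0 := by
      rw [hA.vecMul_eq_zero_iff_s16] at hx ⊢
      exact fun a b j ha hb => by rw [hx a b j ha hb]
    rw [← vecMul_deleteRow A _ v₀ (sub_self _)] at shifted_vecMul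
    intro v
    rcases eq_or_ne v v₀ with rfl | hv
    · rfl
    · exact sub_eq_zero.1 (congrFun (hzero _ shifted_vecMul) ⟨v, hv⟩)

theorem det_deleteRow_ne_zero_iff (hA : IsIncidenceMatrix A) (v₀ : V) (e : {v // v ≠ v₀} ≃ E) :
    ((deleteRow A v₀).submatrix id e).det ≠ 0 ↔ IsConnectedIncidence A := by
  have vecMul_submatrix_eq_zero_iff (y : {v // v ≠ v₀} → ℝ) :
      y ᵥ* (deleteRow A v₀).submatrix id e = 0 ↔ y ᵥ* deleteRow A v₀ = 0 := by
    rw [show y ᵥ* (deleteRow A v₀).submatrix id e = (y ᵥ* deleteRow A v₀) ∘ e from rfl]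
    simp only [funext_iff, Function.comp_apply, Pi.zero_apply, e.forall_congr_left,
      Equiv.apply_symm_apply]
  rw [hA.isConnectedIncidence_iff_vecMul_deleteRow v₀, ne_eq, ← exists_vecMul_eq_zero_iff]
  simp only [vecMul_submatrix_eq_zero_iff]
  grind

open Classical in
theorem det_deleteRow_sq (hA : IsIncidenceMatrix A) (v₀ : V) (e : {v // v ≠ v₀} ≃ E) :
    ((deleteRow A v₀).submatrix id e).det ^ 2 = if IsConnectedIncidence A then 1 else 0 := by
  have det_mem : ((deleteRow A v₀).submatrix id e).det ∈
      Set.range (SignType.cast : SignType → ℝ) :=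
    (isTotallyUnimodular_iff_fintype _).1 hA.isTotallyUnimodular _ _ _
  rw [SignType.range_eq] at det_mem
  have det_ne_zero_iff := hA.det_deleteRow_ne_zero_iff v₀ e
  rcases det_mem with hdet | hdet | hdet <;> simp_all

open Classical in
theorem det_deleteRow_mul_diagonal_mul_transpose [Fintype E] [DecidableEq E]
    (hA : IsIncidenceMatrix A) (w : E → ℝ) (v₀ : V)
    (hcard : Fintype.card E + 1 = Fintype.card V) :
    (deleteRow A v₀ * diagonal w * (deleteRow A v₀)ᵀ).det =
      if IsConnectedIncidence A then ∏ j, w j else 0 := by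
  have e : {v // v ≠ v₀} ≃ E := Fintype.equivOfCardEq (by have := card_subtype_ne_add_one v₀; lia)
  rw [det_mul_diagonal_mul_transpose_of_equiv _ w e, hA.det_deleteRow_sq, mul_ite, mul_one,
    mul_zero]

end IsIncidenceMatrix

end DeleteRow

open Classical in
theorem stmt16_general {V E : Type*} [Fintype V] [DecidableEq V] [Fintype E] [DecidableEq E]
    (A : Matrix V E ℝ) (hA : IsIncidenceMatrix A) (w : E → ℝ) (v₀ : V) :
    (deleteRow A v₀ * diagonal w * (deleteRow A v₀)ᵀ).det =
      ∑ T with IsSpanningTreeOf A T, ∏ j ∈ T, w j := by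
  have mem_powersetCard_iff (T : Finset E) :
      T ∈ powersetCard (Fintype.card {v // v ≠ v₀}) univ ↔ #T + 1 = Fintype.card V := by
    rw [mem_powersetCard_univ, ← card_subtype_ne_add_one v₀, Nat.add_right_cancel_iff]
  calc (deleteRow A v₀ * diagonal w * (deleteRow A v₀)ᵀ).det
      = ∑ T ∈ powersetCard (Fintype.card {v // v ≠ v₀}) univ,
          if IsConnectedIncidence (A.submatrix id ((↑) : T → E)) then ∏ j ∈ T, w j else 0 := by
        rw [det_mul_diagonal_mul_transpose_eq_sum_powersetCard]
        refine sum_congr rfl fun T hT => ?_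
        rw [← prod_coe_sort T w]
        exact (hA.submatrix_id _).det_deleteRow_mul_diagonal_mul_transpose _ v₀
          (by simpa using (mem_powersetCard_iff T).1 hT)
    _ = ∑ T with IsSpanningTreeOf A T, ∏ j ∈ T, w j := by
        rw [← sum_filter]
        congr 1
        ext T
        rw [mem_filter_univ, mem_filter, mem_powersetCard_iff, IsSpanningTreeOf]

theorem det_reducedIncidence_mul_diagonal_mul_transpose {n m : ℕ}
    (A : Matrix (Fin (n + 1)) (Fin m) ℝ) (w : Fin m → ℝ) (i0 : Fin (n + 1)) :
    (reducedIncidence A i0 * diagonal w * (reducedIncidence A i0)ᵀ).det =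
      (deleteRow A i0 * diagonal w * (deleteRow A i0)ᵀ).det := by
  rw [← det_submatrix_equiv_self (finSuccAboveEquiv i0)]
  rfl

open Classical in
theorem spanningTrees_eq_filter_isSpanningTreeOf {n m : ℕ} (A : Matrix (Fin (n + 1)) (Fin m) ℝ) :
    spanningTrees A = univ.filter (IsSpanningTreeOf A) := by
  ext T
  simp only [spanningTrees, mem_filter_univ, IsSpanningTree, IsSpanningTreeOf,
    IsConnectedIncidence, submatrix_apply, id_eq, Subtype.exists, exists_prop, Fintype.card_fin,
    Nat.add_right_cancel_iff, Nat.add_sub_cancel]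

/-- The weighted matrix-tree expansion: `det (A_r W A_rᵀ)` equals the sum, over all
spanning trees `T` of the underlying graph, of the products `∏_{j ∈ T} W_j`. -/
theorem stmt16 {n m : ℕ} (A : Matrix (Fin (n + 1)) (Fin m) ℝ)
    (hA : IsIncidenceMatrix A) (hconn : IsConnectedIncidence A)
    (w : Fin m → ℝ) (i0 : Fin (n + 1)) :
    (reducedIncidence A i0 * Matrix.diagonal w * (reducedIncidence A i0)ᵀ).det =
      ∑ T ∈ spanningTrees A, ∏ j ∈ T, w j := by
  rw [det_reducedIncidence_mul_diagonal_mul_transpose, stmt16_general A hA,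
    spanningTrees_eq_filter_isSpanningTreeOf]
end

section
/- Let A be the incidence matrix of a connected directed graph on n nodes and m edges and let W = diag(W₁,…,W_m) be a diagonal matrix of edge weights. Then the weighted Laplacian A W Aᵀ has rank n − 1 (equivalently, corank one, equivalently its kernel is one-dimensional) if and only if the sum of the spanning tree weights Σ_T ∏_{j ∈ T} W_j, taken over all spanning trees T of the underlying graph, is nonzero. -/
open Matrix

/-!
Laplacians have zero row and column sums, so deleting the row and the column of a root `r` does not
change the rank, and corank one means that the determinant of the reduced Laplacian is nonzero. By
the Cauchy–Binet formula this determinant is the sum, over sets `T` of `n - 1` edges, of the weight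
of `T` times the square of a maximal minor of the reduced incidence matrix.

Over any integral domain a left kernel vector of that minor is a potential on the nodes which
vanishes at `r` and is constant along the edges of `T`, so the minor vanishes exactly when `T` does
not connect the graph. Applied to `ℤ` and to every `ZMod p`, this shows that the integer minor is
`0` or `±1`, whence the matrix-tree theorem.
-/

open Finset Function

section CauchyBinet

variable {n E R : Type*} [Fintype n] [DecidableEq n] [Fintype E] [CommRing R]

theorem sum_eq_sum_perm_of_eq_zero_of_not_injective {M : Type*} [AddCommMonoid M]
    (e : ∀ T : {T : Finset E // #T = Fintype.card n}, n ≃ T.1)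
    (g : (n → E) → M) (hg : ∀ f, ¬ Injective f → g f = 0) :
    ∑ f, g f = ∑ T, ∑ σ : Equiv.Perm n, g (fun i => e T (σ i)) := by
  classical
  have image_eq (T) (σ : Equiv.Perm n) : univ.image (fun i => (e T (σ i) : E)) = T.1 := by
    ext j
    simp only [mem_image, mem_univ, true_and]
    exact ⟨fun ⟨i, hi⟩ => hi ▸ (e T (σ i)).2, fun hj => ⟨σ.symm ((e T).symm ⟨j, hj⟩), by simp⟩⟩
  rw [← Fintype.sum_sigma']
  refine (Fintype.sum_of_injective
    (fun p : Σ _ : {T : Finset E // #T = Fintype.card n}, Equiv.Perm n =>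
      fun i => (e p.1 (p.2 i) : E)) ?_ _ _ (fun f hf => hg f fun hinj => hf ?_) fun _ => rfl).symm
  · rintro ⟨T, σ⟩ ⟨U, τ⟩ h
    obtain rfl : T = U := Subtype.ext <|
      (image_eq T σ).symm.trans <| (congrArg (univ.image ·) h).trans (image_eq U τ)
    obtain rfl : σ = τ := Equiv.ext fun i => (e T).injective <| Subtype.ext <| congrFun h i
    rfl
  · let T : {T : Finset E // #T = Fintype.card n} :=
      ⟨univ.image f, by rw [card_image_of_injective _ hinj, card_univ]⟩
    let index : n → n := fun i => (e T).symm ⟨f i, mem_image_of_mem f (mem_univ i)⟩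
    have index_injective : Injective index := fun a b h =>
      hinj <| congrArg Subtype.val <| (e T).symm.injective h
    exact ⟨⟨T, .ofBijective index (Finite.injective_iff_bijective.mp index_injective)⟩,
      by ext i; simp [index]⟩

theorem det_mul_eq_sum_prod_mul_det_submatrix (M : Matrix n E R) (N : Matrix E n R) :
    (M * N).det = ∑ f : n → E, (∏ i, M i (f i)) * (N.submatrix f id).det := by
  have rows : M * N = fun i => ∑ j, M i j • N j := by
    ext i l
    simp [Matrix.mul_apply]
  rw [rows]
  refine (detRowAlternating.toMultilinearMap.map_sum fun i j => M i j • N j).trans ?_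
  exact sum_congr rfl fun f _ =>
    detRowAlternating.toMultilinearMap.map_smul_univ (fun i => M i (f i)) fun i => N (f i)

theorem cauchy_binet (e : ∀ T : {T : Finset E // #T = Fintype.card n}, n ≃ T.1)
    (M : Matrix n E R) (N : Matrix E n R) :
    (M * N).det =
      ∑ T, (M.submatrix id fun i => e T i).det * (N.submatrix (fun i => e T i) id).det := by
  rw [det_mul_eq_sum_prod_mul_det_submatrix, sum_eq_sum_perm_of_eq_zero_of_not_injective e]
  · refine sum_congr rfl fun T _ => ?_
    rw [← det_transpose (M.submatrix _ _), det_apply', sum_mul]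
    refine sum_congr rfl fun σ _ => ?_
    have permute_rows : N.submatrix (fun i => (e T (σ i) : E)) id =
        (N.submatrix (fun i => (e T i : E)) id).submatrix σ id := rfl
    rw [permute_rows, det_permute]
    simp only [transpose_apply, submatrix_apply, id]
    ring
  · intro f hf
    obtain ⟨a, b, hab, hne⟩ := not_injective_iff.mp hf
    rw [det_zero_of_row_eq hne (by ext; simp [hab]), mul_zero]

theorem det_mul_diagonal_mul_transpose_eq_sum [DecidableEq E]
    (e : ∀ T : {T : Finset E // #T = Fintype.card n}, n ≃ T.1) (M : Matrix n E R) (w : E → R) :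
    (M * diagonal w * Mᵀ).det =
      ∑ T, (∏ j ∈ T.1, w j) * (M.submatrix id fun i => e T i).det ^ 2 := by
  rw [cauchy_binet e]
  refine sum_congr rfl fun T _ => ?_
  have prod_weights : ∏ i, w (e T i) = ∏ j ∈ T.1, w j := by
    rw [(e T).prod_comp fun j => w j, prod_coe_sort]
  have scaled : (M * diagonal w).submatrix id (fun i => (e T i : E)) =
      M.submatrix id (fun i => (e T i : E)) * diagonal fun i => w (e T i) := by
    ext; simp
  rw [scaled, det_mul, det_diagonal, prod_weights, ← transpose_submatrix, det_transpose]
  ring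

end CauchyBinet

section Rank

variable {V E K : Type*} [Fintype V] [Field K]

theorem rank_eq_card_iff_det_ne_zero [DecidableEq V] (M : Matrix V V K) :
    M.rank = Fintype.card V ↔ M.det ≠ 0 := by
  refine ⟨fun h => ?_, rank_of_det_ne_zero⟩
  have cols_independent : LinearIndependent K M.col := by
    rw [linearIndependent_iff_card_eq_finrank_span, Set.finrank, ← rank_eq_finrank_span_cols, h]
  have isUnit : IsUnit M := linearIndependent_cols_iff_isUnit.mp cols_independent
  exact ((isUnit_iff_isUnit_det M).mp isUnit).ne_zero

theorem rank_submatrix_ne_of_one_vecMul_eq_zero [Fintype E] {M : Matrix V E K}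
    (hM : 1 ᵥ* M = 0) (r : V) :
    (M.submatrix ((↑) : {v // v ≠ r} → V) id).rank = M.rank := by
  classical
  let S := Submodule.span K (Set.range (M.submatrix ((↑) : {v // v ≠ r} → V) id).row)
  have row_mem {v : V} (hv : v ≠ r) : M.row v ∈ S := Submodule.subset_span ⟨⟨v, hv⟩, rfl⟩
  have root_row : M.row r = -∑ v ∈ univ.erase r, M.row v := by
    rw [eq_neg_iff_add_eq_zero, add_sum_erase _ _ (mem_univ r), ← hM]
    ext j
    simp [vecMul, dotProduct]
  have span_rows : S = Submodule.span K (Set.range M.row) := by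
    refine le_antisymm (Submodule.span_mono ?_) (Submodule.span_le.mpr ?_)
    · rintro _ ⟨v, rfl⟩
      exact ⟨v, rfl⟩
    · rintro _ ⟨v, rfl⟩
      obtain rfl | hv := eq_or_ne v r
      · rw [root_row]
        exact neg_mem <| sum_mem fun u hu => row_mem (ne_of_mem_erase hu)
      · exact row_mem hv
  rw [rank_eq_finrank_span_row, rank_eq_finrank_span_row, ← span_rows]

theorem rank_submatrix_ne_ne [DecidableEq V] {L : Matrix V V K} (hcol : 1 ᵥ* L = 0)
    (hrow : L *ᵥ 1 = 0) (r : V) :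
    (L.submatrix ((↑) : {v // v ≠ r} → V) ((↑) : {v // v ≠ r} → V)).rank = L.rank := by
  let L' := L.submatrix ((↑) : {v // v ≠ r} → V) id
  have one_vecMul_transpose : 1 ᵥ* L'ᵀ = 0 := by
    rw [vecMul_transpose]
    exact funext fun v => congrFun hrow v
  calc (L.submatrix ((↑) : {v // v ≠ r} → V) ((↑) : {v // v ≠ r} → V)).rank
      = (L'ᵀ.submatrix ((↑) : {v // v ≠ r} → V) id).rank := by rw [← rank_transpose]; rfl
    _ = L'.rank := by
        rw [rank_submatrix_ne_of_one_vecMul_eq_zero one_vecMul_transpose, rank_transpose]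
    _ = L.rank := rank_submatrix_ne_of_one_vecMul_eq_zero hcol r

end Rank

section Incidence

variable {V E : Type*}

/-- The incidence matrix, with entry `1` at the source and `-1` at the target, of the directed
multigraph whose edge `j` goes from `s j` to `t j`. The column of a loop is zero. -/
def orientedIncMatrix (R : Type*) [Ring R] [DecidableEq V] (s t : E → V) : Matrix V E R :=
  of fun v j => (Pi.single (s j) 1 - Pi.single (t j) 1 : V → R) v

/-- The incidence matrix without the row of the root `r`; its maximal minors detect spanning
trees. -/
def reducedIncMatrix (R : Type*) [Ring R] [DecidableEq V] (s t : E → V) (r : V) :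
    Matrix {v // v ≠ r} E R :=
  (orientedIncMatrix R s t).submatrix (↑) id

/-- The simple graph formed by the edges in `T` of the directed multigraph with sources `s` and
targets `t`, forgetting directions, multiplicities and loops. -/
def edgeGraph (s t : E → V) (T : Finset E) : SimpleGraph V :=
  SimpleGraph.fromRel fun u v => ∃ j ∈ T, s j = u ∧ t j = v

open Classical in
/-- The edge sets of the spanning trees of the directed multigraph with sources `s` and targets `t`,
characterized as the connecting sets of `card V - 1` edges. Without nodes the empty set counts as
a spanning tree, by truncated subtraction. -/
noncomputable def treeEdgeSets [Fintype V] [Fintype E] (s t : E → V) : Finset (Finset E) :=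
  {T | #T = Fintype.card V - 1 ∧ (edgeGraph s t T).Preconnected}

theorem mem_treeEdgeSets [Fintype V] [Fintype E] {s t : E → V} {T : Finset E} :
    T ∈ treeEdgeSets s t ↔ #T = Fintype.card V - 1 ∧ (edgeGraph s t T).Preconnected := by
  classical
  simp [treeEdgeSets]

theorem forall_mem_eq_iff_forall_reachable_eq {α : Type*} (s t : E → V) (T : Finset E)
    (y : V → α) :
    (∀ j ∈ T, y (s j) = y (t j)) ↔ ∀ u v, (edgeGraph s t T).Reachable u v → y u = y v := by
  constructor
  · intro h u v huv
    rw [SimpleGraph.reachable_iff_reflTransGen] at huv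
    induction huv with
    | refl => rfl
    | tail _ hadj ih =>
      obtain ⟨-, ⟨j, hj, rfl, rfl⟩ | ⟨j, hj, rfl, rfl⟩⟩ := (SimpleGraph.fromRel_adj _ _ _).mp hadj
      · exact ih.trans (h j hj)
      · exact ih.trans (h j hj).symm
  · intro h j hj
    obtain heq | hne := eq_or_ne (s j) (t j)
    · rw [heq]
    · exact h _ _ (SimpleGraph.Adj.reachable
        ((SimpleGraph.fromRel_adj _ _ _).mpr ⟨hne, .inl ⟨j, hj, rfl, rfl⟩⟩))

variable [Fintype V] [DecidableEq V] (s t : E → V)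

theorem vecMul_orientedIncMatrix {R : Type*} [Ring R] (y : V → R) (j : E) :
    (y ᵥ* orientedIncMatrix R s t) j = y (s j) - y (t j) := by
  simp [orientedIncMatrix, vecMul, dotProduct, mul_sub, Pi.single_apply]

theorem vecMul_reducedIncMatrix {R : Type*} [Ring R] {r : V} {y : V → R} (hy : y r = 0) (j : E) :
    ((fun v : {v // v ≠ r} => y v) ᵥ* reducedIncMatrix R s t r) j = y (s j) - y (t j) := by
  rw [← vecMul_orientedIncMatrix]
  simp only [vecMul, dotProduct, reducedIncMatrix, submatrix_apply, id]
  rw [Fintype.sum_eq_add_sum_subtype_ne _ r, hy, zero_mul, zero_add]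

section Minor

variable {s t} {r : V} {T : Finset E} (e : {v // v ≠ r} ≃ T)

theorem det_reducedIncMatrix_submatrix_eq_zero_iff_exists {R : Type*} [CommRing R] [IsDomain R] :
    ((reducedIncMatrix R s t r).submatrix id fun i => e i).det = 0 ↔
      ∃ y : V → R, y ≠ 0 ∧ y r = 0 ∧ ∀ j ∈ T, y (s j) = y (t j) := by
  rw [← exists_vecMul_eq_zero_iff]
  have vecMul_eq_zero_iff {y : V → R} (hy : y r = 0) :
      (fun v : {v // v ≠ r} => y v) ᵥ* (reducedIncMatrix R s t r).submatrix id (fun i => e i) = 0 ↔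
        ∀ j ∈ T, y (s j) = y (t j) := by
    rw [funext_iff, e.forall_congr_left, Subtype.forall]
    refine forall₂_congr fun j hj => ?_
    rw [← sub_eq_zero (a := y (s j)), ← vecMul_reducedIncMatrix s t hy]
    simp [vecMul, dotProduct]
  constructor
  · rintro ⟨z, hz, hmul⟩
    let y : V → R := extend Subtype.val z 0
    have y_root : y r = 0 := extend_apply' _ _ _ (by simp)
    have restrict_y : (fun v : {v // v ≠ r} => y v) = z :=
      funext fun v => Subtype.val_injective.extend_apply z 0 v
    refine ⟨y, ?_, y_root, (vecMul_eq_zero_iff y_root).mp (restrict_y ▸ hmul)⟩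
    intro hy
    exact hz (by rw [← restrict_y, hy]; rfl)
  · rintro ⟨y, hne, y_root, hy⟩
    refine ⟨fun v => y v, fun hzero => hne (funext fun v => ?_), (vecMul_eq_zero_iff y_root).mpr hy⟩
    obtain rfl | hv := eq_or_ne v r
    · exact y_root
    · exact congrFun hzero ⟨v, hv⟩

theorem det_reducedIncMatrix_submatrix_eq_zero_iff_not_preconnected {R : Type*} [CommRing R]
    [IsDomain R] :
    ((reducedIncMatrix R s t r).submatrix id fun i => e i).det = 0 ↔
      ¬ (edgeGraph s t T).Preconnected := by
  classical
  simp only [det_reducedIncMatrix_submatrix_eq_zero_iff_exists,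
    forall_mem_eq_iff_forall_reachable_eq]
  constructor
  · rintro ⟨y, hne, y_root, hy⟩ hconn
    exact hne (funext fun v => (hy v r (hconn v r)).trans y_root)
  · intro hdisc
    obtain ⟨v, hv⟩ : ∃ v, ¬ (edgeGraph s t T).Reachable r v := by
      by_contra! hreach
      exact hdisc fun u v => (hreach u).symm.trans (hreach v)
    refine ⟨fun u => if (edgeGraph s t T).Reachable r u then 0 else 1, ?_, ?_, ?_⟩
    · exact fun h => one_ne_zero (α := R) (by simpa [hv] using congrFun h v)
    · exact if_pos (.refl r)
    · intro u u' huu'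
      have reachable_iff : (edgeGraph s t T).Reachable r u ↔ (edgeGraph s t T).Reachable r u' :=
        ⟨fun h => h.trans huu', fun h => h.trans huu'.symm⟩
      simp only [reachable_iff]

theorem det_reducedIncMatrix_submatrix_eq_intCast (R : Type*) [CommRing R] :
    ((reducedIncMatrix R s t r).submatrix id fun i => e i).det =
      (((reducedIncMatrix ℤ s t r).submatrix id fun i => e i).det : R) := by
  rw [Int.cast_det]
  congr 1
  ext i j
  simp [reducedIncMatrix, orientedIncMatrix, Pi.single_apply]

theorem isUnit_det_reducedIncMatrix_submatrix (hconn : (edgeGraph s t T).Preconnected) :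
    IsUnit ((reducedIncMatrix ℤ s t r).submatrix id fun i => e i).det := by
  rw [Int.isUnit_iff_natAbs_eq, Nat.eq_one_iff_not_exists_prime_dvd]
  intro p hp hdvd
  have : Fact p.Prime := ⟨hp⟩
  rw [← Int.natCast_dvd, ← ZMod.intCast_zmod_eq_zero_iff_dvd,
    ← det_reducedIncMatrix_submatrix_eq_intCast,
    det_reducedIncMatrix_submatrix_eq_zero_iff_not_preconnected] at hdvd
  exact hdvd hconn

theorem det_reducedIncMatrix_submatrix_sq (R : Type*) [CommRing R]
    [Decidable (edgeGraph s t T).Preconnected] :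
    ((reducedIncMatrix R s t r).submatrix id fun i => e i).det ^ 2 =
      if (edgeGraph s t T).Preconnected then 1 else 0 := by
  rw [det_reducedIncMatrix_submatrix_eq_intCast]
  split_ifs with hconn
  · rw [← Int.cast_pow, Int.isUnit_sq (isUnit_det_reducedIncMatrix_submatrix e hconn),
      Int.cast_one]
  · rw [(det_reducedIncMatrix_submatrix_eq_zero_iff_not_preconnected e).mpr hconn, Int.cast_zero,
      zero_pow two_ne_zero]

end Minor

variable [Fintype E] [DecidableEq E]

theorem weighted_matrix_tree {R : Type*} [CommRing R] (r : V) (w : E → R) :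
    (reducedIncMatrix R s t r * diagonal w * (reducedIncMatrix R s t r)ᵀ).det =
      ∑ T ∈ treeEdgeSets s t, ∏ j ∈ T, w j := by
  classical
  have card_ne : Fintype.card {v // v ≠ r} = Fintype.card V - 1 := by simp
  let e (T : {T : Finset E // #T = Fintype.card {v // v ≠ r}}) : {v // v ≠ r} ≃ T.1 :=
    Fintype.equivOfCardEq (by rw [Fintype.card_coe, T.2])
  rw [det_mul_diagonal_mul_transpose_eq_sum e, treeEdgeSets, ← filter_filter, sum_filter,
    sum_subtype (p := fun T => #T = Fintype.card {v // v ≠ r}) _ (by simp [card_ne])]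
  exact sum_congr rfl fun T _ => by simp [det_reducedIncMatrix_submatrix_sq]

theorem rank_reducedIncMatrix_mul_diagonal_mul_transpose {K : Type*} [Field K] (r : V)
    (w : E → K) :
    (reducedIncMatrix K s t r * diagonal w * (reducedIncMatrix K s t r)ᵀ).rank =
      (orientedIncMatrix K s t * diagonal w * (orientedIncMatrix K s t)ᵀ).rank := by
  have one_vecMul : 1 ᵥ* orientedIncMatrix K s t = 0 := by
    ext j
    simp [vecMul_orientedIncMatrix]
  have eq_submatrix :
      reducedIncMatrix K s t r * diagonal w * (reducedIncMatrix K s t r)ᵀ =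
        (orientedIncMatrix K s t * diagonal w * (orientedIncMatrix K s t)ᵀ).submatrix (↑) (↑) :=
    rfl
  rw [eq_submatrix, rank_submatrix_ne_ne]
  · rw [Matrix.mul_assoc, ← vecMul_vecMul, one_vecMul, zero_vecMul]
  · rw [← mulVec_mulVec, mulVec_transpose, one_vecMul, mulVec_zero]

end Incidence

theorem IsIncidenceMatrix.exists_eq_orientedIncMatrix {V E : Type*} [DecidableEq V]
    {A : Matrix V E ℝ} (hA : IsIncidenceMatrix A) : ∃ s t : E → V, A = orientedIncMatrix ℝ s t := by
  choose s t hne hs ht hzero using hA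
  refine ⟨s, t, ?_⟩
  ext v j
  obtain rfl | hvs := eq_or_ne v (s j)
  · simp [orientedIncMatrix, hs, hne]
  obtain rfl | hvt := eq_or_ne v (t j)
  · simp [orientedIncMatrix, ht, hvs]
  · simp [orientedIncMatrix, hzero j v hvs hvt, hvs, hvt]

theorem edgeGraph_adj_iff_orientedIncMatrix_ne_zero {V E : Type*} (R : Type*) [DecidableEq V]
    [Ring R] [Nontrivial R] (s t : E → V) (T : Finset E) (a b : V) :
    (edgeGraph s t T).Adj a b ↔
      a ≠ b ∧ ∃ j ∈ T, orientedIncMatrix R s t a j ≠ 0 ∧ orientedIncMatrix R s t b j ≠ 0 := by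
  rw [edgeGraph, SimpleGraph.fromRel_adj, ← exists_or]
  refine and_congr_right fun hab => exists_congr fun j => ?_
  rw [← and_or_left]
  refine and_congr_right fun _ => ?_
  simp only [orientedIncMatrix, of_apply, Pi.sub_apply, Pi.single_apply]
  have one_ne : (1 : R) ≠ 0 := one_ne_zero
  split_ifs <;> grind

theorem spanningTrees_orientedIncMatrix {n m : ℕ} (s t : Fin m → Fin n) :
    spanningTrees (orientedIncMatrix ℝ s t) = treeEdgeSets s t := by
  ext T
  have adj_eq := funext₂ fun a b =>
    propext (edgeGraph_adj_iff_orientedIncMatrix_ne_zero ℝ s t T a b)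
  rw [mem_treeEdgeSets, spanningTrees, @mem_filter_univ]
  simp only [IsSpanningTree, SimpleGraph.Preconnected, SimpleGraph.reachable_iff_reflTransGen,
    adj_eq, Fintype.card_fin]

theorem stmt17_general {V E K : Type*} [Fintype V] [DecidableEq V] [Fintype E] [DecidableEq E]
    [Field K] (s t : E → V) (w : E → K) :
    (orientedIncMatrix K s t * diagonal w * (orientedIncMatrix K s t)ᵀ).rank =
        Fintype.card V - 1 ↔
      ∑ T ∈ treeEdgeSets s t, ∏ j ∈ T, w j ≠ 0 := by
  obtain hV | ⟨⟨r⟩⟩ := isEmpty_or_nonempty V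
  · have : IsEmpty E := s.isEmpty
    have tree_empty : treeEdgeSets s t = {∅} := by
      ext T
      simp [mem_treeEdgeSets, SimpleGraph.Preconnected, eq_empty_of_isEmpty T]
    simp [tree_empty, rank_eq_finrank_span_cols]
  · have card_ne : Fintype.card {v // v ≠ r} = Fintype.card V - 1 := by simp
    rw [← rank_reducedIncMatrix_mul_diagonal_mul_transpose s t r, ← card_ne,
      rank_eq_card_iff_det_ne_zero, weighted_matrix_tree]

/-- The weighted Laplacian `A W Aᵀ` has rank `n - 1` (corank one) if and only if
the sum of the spanning tree weights is nonzero. -/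
theorem stmt17 {n m : ℕ} (A : Matrix (Fin n) (Fin m) ℝ)
    (hA : IsIncidenceMatrix A) (hconn : IsConnectedIncidence A)
    (w : Fin m → ℝ) :
    (A * Matrix.diagonal w * Aᵀ).rank = n - 1 ↔
      ∑ T ∈ spanningTrees A, ∏ j ∈ T, w j ≠ 0 := by
  obtain ⟨s, t, rfl⟩ := hA.exists_eq_orientedIncMatrix
  simpa [spanningTrees_orientedIncMatrix] using stmt17_general s t w
end
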